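/- arXiv:math/0610703 — 3 statements merged into one kernel-verified Lean document; each statement's English description precedes it below -/
import Mathlib

section
/- Let E and F be finite-dimensional real normed vector spaces, Z a finite-dimensional real vector space, 𝓜 ⊆ E and 𝓝 ⊆ F open subsets. Let λ : 𝓜 → L(E, Z) and λ̃ : 𝓝 → L(F, Z) be smooth maps (Z-valued 1-forms in local coordinates) such that λ̃(y) : F → Z is a linear isomorphism for every y ∈ 𝓝. Then the following two conditions are equivalent. (a) For every x ∈ 𝓜 and every y ∈ 𝓝 there exist an open neighborhood U of x contained in 𝓜 and a smooth map G : U → 𝓝 with G(x) = y and λ̃(G(z)) ∘ DG(z) = λ(z) for all z ∈ U, where DG(z) denotes the Fréchet derivative. (b) For every x ∈ 𝓜 and y ∈ 𝓝, setting τ = λ̃(y)⁻¹ ∘ λ(x) : E → F, the exterior derivatives correspond under τ: for all u, v ∈ E, (Dλ̃(y)(τ(u)))(τ(v)) − (Dλ̃(y)(τ(v)))(τ(u)) = (Dλ(x)(u))(v) − (Dλ(x)(v))(u), where Dλ(x) ∈ L(E, L(E, Z)) and Dλ̃(y) ∈ L(F, L(F, Z)) are the Fréchet derivatives of λ and λ̃.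 -/
/-!
Since `lamT` is invertible, the pullback equation is the total differential equation
`DG(z) = φ (z, G z)` with `φ (x, y) = (lamT y)⁻¹ ∘ lam x`. Symmetry of the second derivative of a
solution through `(x, y)` says that `Dφ(x, y)(u, φ u) v` is symmetric in `u` and `v`, and
differentiating `lamT y ∘ φ (x, y) = lam x` turns this into the condition on exterior derivatives.

Conversely, the symmetry means that the vector fields `p ↦ (u, φ p u)` on `E × F`, for `u : E`,
commute. Writing them as `p ↦ L p u`, let `c_v` be the integral curve of `L · v` from `p`. For
commuting fields `t ↦ c_v t + t • L (c_v t) h` solves the equation of `c_{v + h}` up to `o(h)`,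
so by Grönwall's inequality the endpoint map `Φ v = c_v 1` has derivative `L (Φ v)` at `v`. Its
first component is therefore `x + v`, and its image is the graph of a solution.
-/

open Set Metric Filter Asymptotics
open scoped NNReal

section Calculus

open scoped Topology

variable {X Y : Type*} [NormedAddCommGroup X] [NormedAddCommGroup Y]

lemma eventually_forall_mem_norm_sub_sub_fderiv_le {𝕜 : Type*} [RCLike 𝕜]
    [NormedSpace 𝕜 X] [NormedSpace 𝕜 Y] {f : X → Y} {K : Set X} (hK : IsCompact K)
    (hf : ∀ q ∈ K, ContDiffAt 𝕜 1 f q) {ε : ℝ} (hε : 0 < ε) :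
    ∀ᶠ k in 𝓝 (0 : X), ∀ q ∈ K, ‖f (q + k) - f q - fderiv 𝕜 f q k‖ ≤ ε * ‖k‖ := by
  refine hK.eventually_forall_of_forall_eventually fun q hq ↦ ?_
  have hstrict : ∀ᶠ z : X × X in 𝓝 (0, q),
      ‖f (z.2 + z.1) - f z.2 - fderiv 𝕜 f q z.1‖ ≤ ε / 2 * ‖z.1‖ := by
    have hlim : Tendsto (fun z : X × X ↦ (z.2 + z.1, z.2)) (𝓝 (0, q)) (𝓝 (q, q)) :=
      Continuous.tendsto' (by fun_prop) _ _ (by simp)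
    simpa using hlim.eventually
      (((hf q hq).hasStrictFDerivAt one_ne_zero).isLittleO.bound (half_pos hε))
  have hcont : ∀ᶠ z : X × X in 𝓝 (0, q), ‖fderiv 𝕜 f z.2 - fderiv 𝕜 f q‖ < ε / 2 := by
    have hlim := ((hf q hq).continuousAt_fderiv one_ne_zero).tendsto.comp
      (continuous_snd.tendsto ((0 : X), q))
    simpa [dist_eq_norm] using hlim.eventually (ball_mem_nhds _ (half_pos hε))
  filter_upwards [hstrict, hcont] with ⟨k, p⟩ hk hp
  calc ‖f (p + k) - f p - fderiv 𝕜 f p k‖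
      = ‖(f (p + k) - f p - fderiv 𝕜 f q k) - (fderiv 𝕜 f p - fderiv 𝕜 f q) k‖ := by
        rw [sub_apply]; congr 1; abel
    _ ≤ ε / 2 * ‖k‖ + ε / 2 * ‖k‖ :=
        (norm_sub_le _ _).trans (add_le_add hk (ContinuousLinearMap.le_of_opNorm_le _ hp.le k))
    _ = ε * ‖k‖ := by ring

lemma gronwallBound_zero_eq_mul (K ε t : ℝ) :
    gronwallBound 0 K ε t = ε * gronwallBound 0 K 1 t := by
  rcases eq_or_ne K 0 with rfl | hK
  · simp [gronwallBound_K0]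
  · simp only [gronwallBound_of_K_ne_0 hK]
    ring

variable [NormedSpace ℝ X]

lemma exists_isIntegralCurveOn_mem_closedBall [CompleteSpace X] {f : X → X} {p : X} {r K : ℝ≥0}
    (hlip : LipschitzOnWith K f (closedBall p r)) (hbound : ∀ q ∈ closedBall p r, ‖f q‖ ≤ r) :
    ∃ c : ℝ → X, c 0 = p ∧ IsIntegralCurveOn c (fun _ ↦ f) (Icc 0 1) ∧
      ∀ t, c t ∈ closedBall p r := by
  have hf : IsPicardLindelof (fun _ ↦ f) (⟨0, by simp⟩ : Icc (0 : ℝ) 1) p r 0 r K :=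
    .of_time_independent hbound hlip (by simp)
  have hp : p ∈ closedBall p (0 : ℝ≥0) := by simp
  obtain ⟨α, hα⟩ := ODE.FunSpace.exists_isFixedPt_next hf hp
  have hmem (t : ℝ) : α.compProj t ∈ closedBall p r := α.compProj_mem_closedBall hf.mul_max_le
  have hpicard : EqOn α.compProj (ODE.picard (fun _ ↦ f) 0 p α.compProj) (Icc 0 1) :=
    fun t ht ↦ (ODE.FunSpace.compProj_of_mem ht).trans
      ((ODE.FunSpace.isFixedPt_next_iff hf hp).1 hα ⟨t, ht⟩)
  refine ⟨α.compProj, ?_, fun t ht ↦ ?_, hmem⟩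
  · rw [hpicard (by simp), ODE.picard_apply₀]
  · exact (ODE.hasDerivWithinAt_picard_Icc (by simp) hf.continuousOn_uncurry
      α.continuous_compProj.continuousOn (fun t _ ↦ hmem t) p ht).congr_of_mem hpicard ht

lemma eq_of_isIntegralCurveOn_zero {c : ℝ → X} {a b : ℝ} (hab : a ≤ b)
    (hc : IsIntegralCurveOn c 0 (Icc a b)) : c b = c a :=
  constant_of_has_deriv_right_zero hc.continuousOn
    (fun t ht ↦ (hc t (Ico_subset_Icc_self ht)).mono_of_mem_nhdsWithin (Icc_mem_nhdsGE_of_mem ht))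
    b (right_mem_Icc.2 hab)

lemma norm_sub_le_of_isIntegralCurveOn_of_norm_defect_le {f : X → X} {s : Set X} {K : ℝ≥0}
    (hf : LipschitzOnWith K f s) {c g g' : ℝ → X} {ε : ℝ}
    (hc : IsIntegralCurveOn c (fun _ ↦ f) (Icc 0 1)) (hcs : MapsTo c (Icc 0 1) s)
    (hg : ∀ t ∈ Icc (0 : ℝ) 1, HasDerivWithinAt g (g' t) (Icc 0 1) t)
    (hgs : MapsTo g (Icc 0 1) s) (h₀ : c 0 = g 0)
    (hdefect : ∀ t ∈ Icc (0 : ℝ) 1, ‖g' t - f (g t)‖ ≤ ε) :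
    ‖c 1 - g 1‖ ≤ ε * gronwallBound 0 K 1 1 := by
  have hright {γ : ℝ → X} {γ' : X} {t : ℝ} (ht : t ∈ Ico (0 : ℝ) 1)
      (hγ : HasDerivWithinAt γ γ' (Icc 0 1) t) : HasDerivWithinAt γ γ' (Ici t) t :=
    hγ.mono_of_mem_nhdsWithin (Icc_mem_nhdsGE_of_mem ht)
  have hcompare := dist_le_of_approx_trajectories_ODE_of_mem (v := fun _ ↦ f) (s := fun _ ↦ s)
    (fun _ _ ↦ hf) hc.continuousOn (fun t ht ↦ hright ht (hc t (Ico_subset_Icc_self ht)))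
    (fun t _ ↦ (dist_self (f (c t))).le) (fun t ht ↦ hcs (Ico_subset_Icc_self ht))
    (fun t ht ↦ (hg t ht).continuousWithinAt)
    (fun t ht ↦ hright ht (hg t (Ico_subset_Icc_self ht)))
    (fun t ht ↦ (dist_eq_norm (g' t) _).trans_le (hdefect t (Ico_subset_Icc_self ht)))
    (fun t ht ↦ hgs (Ico_subset_Icc_self ht)) (dist_le_zero.2 h₀) 1 (by simp)
  rwa [dist_eq_norm, zero_add, sub_zero, gronwallBound_zero_eq_mul] at hcompare

end Calculus

section CommutingFields

open scoped Topology

variable {E X : Type*} [NormedAddCommGroup E] [NormedSpace ℝ E]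
  [NormedAddCommGroup X] [NormedSpace ℝ X] {L : X → E →L[ℝ] X}

/-- The vector fields `q ↦ L q u`, for `u : E`, have pairwise vanishing Lie brackets at `q`. -/
def FieldsCommuteAt (L : X → E →L[ℝ] X) (q : X) : Prop :=
  ∀ u v : E, fderiv ℝ L q (L q u) v = fderiv ℝ L q (L q v) u

lemma lipschitzOnWith_clm_apply {C : ℝ≥0} {s : Set X} (hL : LipschitzOnWith C L s) (v : E) :
    LipschitzOnWith (C * ‖v‖₊) (fun q ↦ L q v) s :=
  LipschitzOnWith.of_dist_le_mul fun a ha b hb ↦ by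
    calc dist (L a v) (L b v) ≤ dist (L a) (L b) * ‖v‖ := by
          simpa only [dist_eq_norm, sub_apply] using (L a - L b).le_opNorm v
      _ ≤ C * dist a b * ‖v‖ := by gcongr; exact hL.dist_le_mul a ha b hb
      _ = (C * ‖v‖₊ : ℝ≥0) * dist a b := by push_cast; ring

lemma hasDerivWithinAt_add_smul_clm_apply {c : ℝ → X} {s : Set ℝ} {t : ℝ} {v : E}
    (hc : HasDerivWithinAt c (L (c t) v) s t) (hL : DifferentiableAt ℝ L (c t)) (h : E) :
    HasDerivWithinAt (fun τ ↦ c τ + τ • L (c τ) h)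
      (L (c t) (v + h) + t • fderiv ℝ L (c t) (L (c t) v) h) s t := by
  have hLc : HasDerivWithinAt (fun τ ↦ L (c τ) h) (fderiv ℝ L (c t) (L (c t) v) h) s t := by
    simpa using (hL.hasFDerivAt.comp_hasDerivWithinAt t hc).clm_apply
      (hasDerivWithinAt_const t s h)
  refine (hc.add ((hasDerivWithinAt_id t s).smul hLc)).congr_deriv ?_
  simp only [id_eq, one_smul, map_add]
  abel

-- Commutation replaces `t • DL(q)(L q v) h` by `DL(q)(k) v` with `k = t • L q h`, which cancels
-- the first order of `L (q + k) v`; the rest is `o(h)`.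
lemma FieldsCommuteAt.norm_defect_le {q : X} (hq : FieldsCommuteAt L q) {v h : E} {t C M ε : ℝ}
    (ht : t ∈ Icc (0 : ℝ) 1) (hM : ‖L q‖ ≤ M) (hC : ‖fderiv ℝ L q‖ ≤ C) (hε : 0 ≤ ε)
    (hrem : ‖L (q + t • L q h) - L q - fderiv ℝ L q (t • L q h)‖ ≤ ε * ‖t • L q h‖) :
    ‖L q (v + h) + t • fderiv ℝ L q (L q v) h - L (q + t • L q h) (v + h)‖
      ≤ M * (C * ‖h‖ + ε * ‖v + h‖) * ‖h‖ := by
  have hC₀ : 0 ≤ C := (norm_nonneg (fderiv ℝ L q)).trans hC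
  set k := t • L q h with hk
  have hk_le : ‖k‖ ≤ M * ‖h‖ := by
    rw [hk, norm_smul, Real.norm_of_nonneg ht.1]
    exact (mul_le_of_le_one_left (norm_nonneg _) ht.2).trans ((L q).le_of_opNorm_le hM h)
  have hswap : t • fderiv ℝ L q (L q v) h = fderiv ℝ L q k v := by
    rw [hq v h, hk, map_smul, smul_apply]
  calc ‖L q (v + h) + t • fderiv ℝ L q (L q v) h - L (q + k) (v + h)‖
      = ‖fderiv ℝ L q k h + (L (q + k) - L q - fderiv ℝ L q k) (v + h)‖ := by
        rw [hswap, ← norm_neg]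
        simp only [sub_apply, map_add]
        congr 1
        abel
    _ ≤ C * ‖k‖ * ‖h‖ + ε * ‖k‖ * ‖v + h‖ :=
        norm_add_le_of_le
          (ContinuousLinearMap.le_of_opNorm_le _ (ContinuousLinearMap.le_of_opNorm_le _ hC k) h)
          (ContinuousLinearMap.le_of_opNorm_le _ hrem (v + h))
    _ = ‖k‖ * (C * ‖h‖ + ε * ‖v + h‖) := by ring
    _ ≤ M * ‖h‖ * (C * ‖h‖ + ε * ‖v + h‖) := by gcongr
    _ = M * (C * ‖h‖ + ε * ‖v + h‖) * ‖h‖ := by ring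

variable {s : Set X} {C : ℝ≥0}

lemma eventually_forall_mem_add_smul_clm_apply {K : Set X} {M : ℝ} (hM : ∀ q ∈ K, ‖L q‖ ≤ M)
    {P : X → X → Prop} (hP : ∀ᶠ k in 𝓝 0, ∀ q ∈ K, P q k) :
    ∀ᶠ h in 𝓝 (0 : E), ∀ q ∈ K, ∀ t ∈ Icc (0 : ℝ) 1, P q (t • L q h) := by
  obtain ⟨δ, hδ, hball⟩ := Metric.eventually_nhds_iff.1 hP
  have hsmall : ∀ᶠ h in 𝓝 (0 : E), M * ‖h‖ < δ :=
    (Continuous.tendsto' (by fun_prop) _ _ (by simp)).eventually_lt_const hδ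
  filter_upwards [hsmall] with h hh q hq t ht
  refine hball ?_ q hq
  rw [dist_zero_right, norm_smul, Real.norm_of_nonneg ht.1]
  exact ((mul_le_of_le_one_left (norm_nonneg _) ht.2).trans
    ((L q).le_of_opNorm_le (hM q hq) h)).trans_lt hh

lemma eventually_forall_mem_norm_defect_le (hs : IsOpen s) (hL : ContDiffOn ℝ 1 L s)
    (hlip : LipschitzOnWith C L s) (hcomm : ∀ q ∈ s, FieldsCommuteAt L q)
    {K : Set X} (hK : IsCompact K) (hKs : K ⊆ s) (v : E) {ε : ℝ} (hε : 0 < ε) :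
    ∀ᶠ h in 𝓝 (0 : E), ∀ q ∈ K, ∀ t ∈ Icc (0 : ℝ) 1, q + t • L q h ∈ s ∧
      ‖L q (v + h) + t • fderiv ℝ L q (L q v) h - L (q + t • L q h) (v + h)‖ ≤ ε * ‖h‖ := by
  obtain ⟨M, hM₀, hM⟩ : ∃ M > 0, ∀ q ∈ K, ‖L q‖ ≤ M := by
    obtain ⟨M, hM⟩ := hK.exists_bound_of_continuousOn (hL.continuousOn.mono hKs)
    exact ⟨max M 1, by positivity, fun q hq ↦ (hM q hq).trans (le_max_left _ _)⟩
  set ε' := ε / (M * (‖v‖ + 1)) with hε'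
  have hε'₀ : 0 < ε' := by positivity
  have hmem : ∀ᶠ k in 𝓝 (0 : X), ∀ q ∈ K, q + k ∈ s :=
    hK.eventually_forall_of_forall_eventually fun q hq ↦
      (continuous_snd.add continuous_fst).continuousAt.eventually_mem
        (hs.mem_nhds (by simpa using hKs hq))
  have hrem := eventually_forall_mem_norm_sub_sub_fderiv_le hK
    (fun q hq ↦ hL.contDiffAt (hs.mem_nhds (hKs hq))) hε'₀
  have hcoeff : ∀ᶠ h in 𝓝 (0 : E), M * (C * ‖h‖ + ε' * ‖v + h‖) < ε := by
    refine (Continuous.tendsto' (by fun_prop) _ (M * (ε' * ‖v‖)) (by simp)).eventually_lt_const ?_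
    calc M * (ε' * ‖v‖) < M * (ε' * (‖v‖ + 1)) := by gcongr; exact lt_add_one _
      _ = ε := by rw [hε']; field_simp
  filter_upwards [eventually_forall_mem_add_smul_clm_apply hM (hmem.and hrem |>.mono
    fun k hk q hq ↦ And.intro (hk.1 q hq) (hk.2 q hq)), hcoeff] with h hh hlt q hq t ht
  refine ⟨(hh q hq t ht).1, ?_⟩
  have hC : ‖fderiv ℝ L q‖ ≤ C :=
    norm_fderiv_le_of_lipschitzOn ℝ (hs.mem_nhds (hKs hq)) hlip
  exact ((hcomm q (hKs hq)).norm_defect_le ht (hM q hq) hC hε'₀.le (hh q hq t ht).2).trans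
    (by gcongr)

-- Grönwall compares `c w` with the approximate solution `t ↦ c v t + t • L (c v t) (w - v)`.
theorem hasFDerivAt_integralCurve_endpoint (hs : IsOpen s) (hL : ContDiffOn ℝ 1 L s)
    (hlip : LipschitzOnWith C L s) (hcomm : ∀ q ∈ s, FieldsCommuteAt L q)
    {c : E → ℝ → X} {p : X} {v : E} (hc₀ : ∀ᶠ w in 𝓝 v, c w 0 = p)
    (hc : ∀ᶠ w in 𝓝 v, IsIntegralCurveOn (c w) (fun _ q ↦ L q w) (Icc 0 1))
    (hcs : ∀ᶠ w in 𝓝 v, MapsTo (c w) (Icc 0 1) s) :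
    HasFDerivAt (fun w ↦ c w 1) (L (c v 1)) v := by
  have hcv := hc.self_of_nhds
  have hcvs := hcs.self_of_nhds
  set K : ℝ≥0 := C * (‖v‖₊ + 1) with hK
  set B := gronwallBound 0 K 1 1
  have hB : 0 ≤ B := by
    simpa only [gronwallBound_x0] using
      gronwallBound_mono le_rfl zero_le_one K.coe_nonneg zero_le_one
  rw [hasFDerivAt_iff_isLittleO_nhds_zero, isLittleO_iff]
  intro ε hε
  have hadd : Tendsto (fun h ↦ v + h) (𝓝 0) (𝓝 v) := Continuous.tendsto' (by fun_prop) _ _ (by simp)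
  have hnorm : ∀ᶠ h in 𝓝 (0 : E), ‖v + h‖ < ‖v‖ + 1 :=
    hadd.norm.eventually_lt_const (lt_add_one _)
  filter_upwards [hnorm, hadd.eventually hc₀, hadd.eventually hc, hadd.eventually hcs,
    eventually_forall_mem_norm_defect_le hs hL hlip hcomm
      (isCompact_Icc.image_of_continuousOn hcv.continuousOn) hcvs.image_subset v
      (show 0 < ε / (B + 1) by positivity)] with h hh hw₀ hw hws hdefect
  rw [forall_mem_image] at hdefect
  have hlipw : LipschitzOnWith K (fun q ↦ L q (v + h)) s :=
    (lipschitzOnWith_clm_apply hlip (v + h)).weaken (by rw [hK]; gcongr; exact_mod_cast hh.le)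
  have hcompare := norm_sub_le_of_isIntegralCurveOn_of_norm_defect_le hlipw hw hws
    (fun t ht ↦ hasDerivWithinAt_add_smul_clm_apply (hcv t ht)
      ((hL.contDiffAt (hs.mem_nhds (hcvs ht))).differentiableAt one_ne_zero) h)
    (fun t ht ↦ (hdefect ht t ht).1) (by simp [hw₀, hc₀.self_of_nhds])
    (fun t ht ↦ (hdefect ht t ht).2)
  calc ‖c (v + h) 1 - c v 1 - L (c v 1) h‖
      = ‖c (v + h) 1 - (c v 1 + (1 : ℝ) • L (c v 1) h)‖ := by rw [one_smul, sub_sub]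
    _ ≤ ε / (B + 1) * ‖h‖ * B := hcompare
    _ = ε * ‖h‖ * (B / (B + 1)) := by ring
    _ ≤ ε * ‖h‖ :=
        mul_le_of_le_one_right (by positivity) ((div_le_one (by positivity)).2 (by linarith))

theorem exists_hasFDerivAt_of_fieldsCommuteAt [CompleteSpace X] {p : X}
    (hL : ContDiffAt ℝ 1 L p) (hcomm : ∀ᶠ q in 𝓝 p, FieldsCommuteAt L q) :
    ∃ Φ : E → X, Φ 0 = p ∧ ∀ᶠ v in 𝓝 0, HasFDerivAt Φ (L (Φ v)) v := by
  obtain ⟨C, t, ht, hlip⟩ := hL.exists_lipschitzOnWith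
  have hC1 : ∀ᶠ q in 𝓝 p, ContDiffAt ℝ 1 L q := hL.eventually (by simp)
  have hbound : ∀ᶠ q in 𝓝 p, ‖L q‖ < ‖L p‖ + 1 :=
    hL.continuousAt.norm.eventually_lt_const (lt_add_one _)
  obtain ⟨ρ, hρ, hball⟩ := eventually_nhds_iff_ball.1 ((hC1.and hbound).and (hcomm.and ht))
  set r : ℝ≥0 := ⟨ρ / 2, by positivity⟩
  have hr₀ : (0 : ℝ) < r := half_pos hρ
  have hsub : closedBall p r ⊆ ball p ρ := closedBall_subset_ball (half_lt_self hρ)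
  have hlip : LipschitzOnWith C L (ball p ρ) := hlip.mono fun q hq ↦ (hball q hq).2.2
  have hsmall : ∀ᶠ v in 𝓝 (0 : E), (‖L p‖ + 1) * ‖v‖ < r :=
    (Continuous.tendsto' (by fun_prop) _ _ (by simp)).eventually_lt_const hr₀
  have hcurve (v : E) (hv : (‖L p‖ + 1) * ‖v‖ < r) :
      ∃ c : ℝ → X, c 0 = p ∧ IsIntegralCurveOn c (fun _ q ↦ L q v) (Icc 0 1) ∧
        ∀ t, c t ∈ closedBall p r :=
    exists_isIntegralCurveOn_mem_closedBall
      (lipschitzOnWith_clm_apply (hlip.mono hsub) v) fun q hq ↦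
        ((L q).le_of_opNorm_le (hball q (hsub hq)).1.2.le v).trans hv.le
  choose! c hc₀ hc hcr using hcurve
  refine ⟨fun v ↦ c v 1, ?_, hsmall.eventually_nhds.mono fun v hv ↦
    hasFDerivAt_integralCurve_endpoint isOpen_ball
      (fun q hq ↦ (hball q hq).1.1.contDiffWithinAt) hlip (fun q hq ↦ (hball q hq).2.1)
      (hv.mono hc₀) (hv.mono hc) (hv.mono fun w hw t _ ↦ hsub (hcr w hw t))⟩
  have hzero : (‖L p‖ + 1) * ‖(0 : E)‖ < r := by simpa using hr₀
  have hconst : IsIntegralCurveOn (c 0) 0 (Icc 0 1) := by simpa [Pi.zero_def] using hc 0 hzero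
  exact (eq_of_isIntegralCurveOn_zero zero_le_one hconst).trans (hc₀ 0 hzero)

end CommutingFields

section TotalDifferentialEquation

open scoped Topology

variable {E F : Type*} [NormedAddCommGroup E] [NormedSpace ℝ E]
  [NormedAddCommGroup F] [NormedSpace ℝ F] {φ : E × F → E →L[ℝ] F}

/-- The Frobenius integrability condition at `p` for the total differential equation
`DG(z) = φ (z, G z)`: along a solution through `p`, the second derivative prescribed by the
equation is symmetric. -/
def IsCompletelyIntegrableAt (φ : E × F → E →L[ℝ] F) (p : E × F) : Prop :=
  ∀ u v : E, fderiv ℝ φ p (u, φ p u) v = fderiv ℝ φ p (v, φ p v) u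

/-- The lift of `u : E` to the vector `(u, φ p u)` tangent at `p` to the graphs of solutions of
`DG(z) = φ (z, G z)`. -/
def horizontalLift (φ : E × F → E →L[ℝ] F) (p : E × F) : E →L[ℝ] E × F :=
  (ContinuousLinearMap.id ℝ E).prod (φ p)

lemma horizontalLift_eq_inl_add_inr_comp (p : E × F) :
    horizontalLift φ p = .inl ℝ E F + (ContinuousLinearMap.inr ℝ E F).comp (φ p) := by
  ext u <;> simp [horizontalLift]

lemma contDiffAt_horizontalLift {n : WithTop ℕ∞} {p : E × F} (hφ : ContDiffAt ℝ n φ p) :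
    ContDiffAt ℝ n (horizontalLift φ) p := by
  simp only [funext horizontalLift_eq_inl_add_inr_comp]
  exact contDiffAt_const.add (contDiffAt_const.clm_comp hφ)

lemma fderiv_horizontalLift_apply {p : E × F} (hφ : DifferentiableAt ℝ φ p) (w : E × F) (u : E) :
    fderiv ℝ (horizontalLift φ) p w u = (0, fderiv ℝ φ p w u) := by
  have hlift := ((hasFDerivAt_const (ContinuousLinearMap.inr ℝ E F) p).clm_comp
    hφ.hasFDerivAt).const_add (.inl ℝ E F)
  simp only [← horizontalLift_eq_inl_add_inr_comp] at hlift
  simp [hlift.fderiv]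

lemma IsCompletelyIntegrableAt.fieldsCommuteAt_horizontalLift {p : E × F}
    (hp : IsCompletelyIntegrableAt φ p) (hφ : DifferentiableAt ℝ φ p) :
    FieldsCommuteAt (horizontalLift φ) p := fun u v ↦ by
  rw [fderiv_horizontalLift_apply hφ, fderiv_horizontalLift_apply hφ]
  exact congrArg (Prod.mk 0) (hp u v)

theorem exists_solution_of_isCompletelyIntegrableAt [CompleteSpace E] [CompleteSpace F]
    {x : E} {y : F} (hφ : ContDiffAt ℝ 1 φ (x, y))
    (hint : ∀ᶠ p in 𝓝 (x, y), IsCompletelyIntegrableAt φ p) :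
    ∃ G : E → F, G x = y ∧ ∀ᶠ z in 𝓝 x, HasFDerivAt G (φ (z, G z)) z := by
  have hcomm : ∀ᶠ p in 𝓝 (x, y), FieldsCommuteAt (horizontalLift φ) p := by
    filter_upwards [hint, hφ.eventually (by simp)] with p hp hφp
    exact hp.fieldsCommuteAt_horizontalLift (hφp.differentiableAt one_ne_zero)
  obtain ⟨Φ, hΦ₀, hΦ⟩ :=
    exists_hasFDerivAt_of_fieldsCommuteAt (contDiffAt_horizontalLift hφ) hcomm
  obtain ⟨ρ, hρ, hball⟩ := eventually_nhds_iff_ball.1 hΦ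
  have hfst : EqOn (fun v ↦ (Φ v).1) (fun v ↦ x + v) (ball 0 ρ) := by
    have hderiv (v : E) (hv : v ∈ ball 0 ρ) :
        HasFDerivAt (fun v ↦ (Φ v).1) (ContinuousLinearMap.id ℝ E) v := (hball v hv).fst
    have hderiv' (v : E) : HasFDerivAt (fun v ↦ x + v) (ContinuousLinearMap.id ℝ E) v :=
      (hasFDerivAt_id v).const_add x
    exact isOpen_ball.eqOn_of_fderiv_eq (convex_ball 0 ρ).isPreconnected
      (fun v hv ↦ (hderiv v hv).differentiableAt.differentiableWithinAt)
      (fun v _ ↦ (hderiv' v).differentiableAt.differentiableWithinAt)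
      (fun v hv ↦ (hderiv v hv).fderiv.trans (hderiv' v).fderiv.symm)
      (mem_ball_self hρ) (by simp [hΦ₀])
  refine ⟨fun z ↦ (Φ (z - x)).2, by simp [hΦ₀], ?_⟩
  filter_upwards [ball_mem_nhds x hρ] with z hz
  have hzρ : z - x ∈ ball 0 ρ := by simpa [dist_eq_norm] using hz
  have hΦz : Φ (z - x) = (z, (Φ (z - x)).2) := Prod.ext (by simpa using hfst hzρ) rfl
  rw [← hΦz]
  exact (hasFDerivAt_comp_sub x).2 (hball _ hzρ).snd

lemma isCompletelyIntegrableAt_of_solution {G : E → F} {x : E}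
    (hφ : DifferentiableAt ℝ φ (x, G x)) (hG : ∀ᶠ z in 𝓝 x, HasFDerivAt G (φ (z, G z)) z) :
    IsCompletelyIntegrableAt φ (x, G x) :=
  second_derivative_symmetric_of_eventually hG
    (hφ.hasFDerivAt.comp x ((hasFDerivAt_id x).prodMk hG.self_of_nhds))

variable {U : Set E} {W : Set (E × F)} {G : E → F}

lemma contDiffOn_succ_of_solution {n : ℕ∞} (hU : IsOpen U) (hφ : ContDiffOn ℝ n φ W)
    (hGW : ∀ z ∈ U, (z, G z) ∈ W) (hG : ∀ z ∈ U, HasFDerivAt G (φ (z, G z)) z) :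
    ContDiffOn ℝ (n + 1) G U := by
  have hdiff : DifferentiableOn ℝ G U := fun z hz ↦
    (hG z hz).differentiableAt.differentiableWithinAt
  have bootstrap (m : ℕ) (hφm : ContDiffOn ℝ m φ W) (hGm : ContDiffOn ℝ m G U) :
      ContDiffOn ℝ (m + 1) G U :=
    (contDiffOn_succ_iff_fderiv_of_isOpen hU).2 ⟨hdiff, by simp,
      (hφm.comp (contDiffOn_id.prodMk hGm) hGW).congr fun z hz ↦ (hG z hz).fderiv⟩
  have hnat (m : ℕ) (hφm : ContDiffOn ℝ m φ W) : ContDiffOn ℝ (m + 1) G U := by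
    induction m with
    | zero => exact bootstrap 0 hφm (by simpa using hdiff.continuousOn)
    | succ m ih => exact bootstrap _ hφm (by exact_mod_cast ih (hφm.of_le (by simp)))
  induction n using ENat.recTopCoe with
  | top =>
    exact contDiffOn_infty.2 fun m ↦ (hnat m (contDiffOn_infty.1 hφ m)).of_le (by simp)
  | coe m => exact hnat m hφ

theorem forall_exists_solution_iff_forall_isCompletelyIntegrableAt
    [CompleteSpace E] [CompleteSpace F] {n : ℕ∞} (hn : n ≠ 0) (hW : IsOpen W)
    (hφ : ContDiffOn ℝ n φ W) :
    (∀ x y, (x, y) ∈ W → ∃ U : Set E, IsOpen U ∧ x ∈ U ∧ ∃ G : E → F, ContDiffOn ℝ (n + 1) G U ∧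
        (∀ z ∈ U, (z, G z) ∈ W) ∧ G x = y ∧ ∀ z ∈ U, fderiv ℝ G z = φ (z, G z)) ↔
      ∀ p ∈ W, IsCompletelyIntegrableAt φ p := by
  have hφ₁ (p : E × F) (hp : p ∈ W) : ContDiffAt ℝ 1 φ p :=
    (hφ.contDiffAt (hW.mem_nhds hp)).of_le (by exact_mod_cast Order.one_le_iff_ne_zero.2 hn)
  refine ⟨fun hsol ⟨x, y⟩ hp ↦ ?_, fun hint x y hp ↦ ?_⟩
  · obtain ⟨U, hU, hxU, G, hG, -, rfl, hsolG⟩ := hsol x y hp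
    refine isCompletelyIntegrableAt_of_solution ((hφ₁ _ hp).differentiableAt one_ne_zero) ?_
    filter_upwards [hU.mem_nhds hxU] with z hz
    rw [← hsolG z hz]
    exact ((hG.contDiffAt (hU.mem_nhds hz)).differentiableAt (by simp)).hasFDerivAt
  · obtain ⟨G, rfl, hG⟩ := exists_solution_of_isCompletelyIntegrableAt (hφ₁ _ hp)
      (eventually_of_mem (hW.mem_nhds hp) hint)
    have hgraph : ∀ᶠ z in 𝓝 x, (z, G z) ∈ W :=
      (continuousAt_id.prodMk hG.self_of_nhds.continuousAt).eventually_mem (hW.mem_nhds hp)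
    obtain ⟨U, hUsub, hU, hxU⟩ := _root_.eventually_nhds_iff.1 (hG.and hgraph)
    exact ⟨U, hU, hxU, G,
      contDiffOn_succ_of_solution hU hφ (fun z hz ↦ (hUsub z hz).2) fun z hz ↦ (hUsub z hz).1,
      fun z hz ↦ (hUsub z hz).2, rfl, fun z hz ↦ (hUsub z hz).1.fderiv⟩

end TotalDifferentialEquation

section InvertibleMaps

lemma comp_eq_iff_eq_inverse_comp {R M N P : Type*} [Semiring R]
    [TopologicalSpace M] [AddCommMonoid M] [Module R M]
    [TopologicalSpace N] [AddCommMonoid N] [Module R N]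
    [TopologicalSpace P] [AddCommMonoid P] [Module R P]
    {A : N →L[R] P} (hA : A.IsInvertible) {B : M →L[R] N} {C : M →L[R] P} :
    A.comp B = C ↔ B = A.inverse.comp C := by
  constructor <;> rintro rfl
  · rw [← ContinuousLinearMap.comp_assoc, hA.inverse_comp_self, ContinuousLinearMap.id_comp]
  · rw [← ContinuousLinearMap.comp_assoc, hA.self_comp_inverse, ContinuousLinearMap.id_comp]

lemma isInvertible_of_bijective {𝕜 M N : Type*} [NontriviallyNormedField 𝕜] [CompleteSpace 𝕜]
    [AddCommGroup M] [Module 𝕜 M] [TopologicalSpace M] [IsTopologicalAddGroup M]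
    [ContinuousSMul 𝕜 M] [T2Space M] [FiniteDimensional 𝕜 M]
    [AddCommGroup N] [Module 𝕜 N] [TopologicalSpace N] [IsTopologicalAddGroup N]
    [ContinuousSMul 𝕜 N] [T2Space N] {A : M →L[𝕜] N} (hA : Function.Bijective A) :
    A.IsInvertible := by
  have := (LinearEquiv.ofBijective A.toLinearMap hA).finiteDimensional
  exact ⟨(LinearEquiv.ofBijective A.toLinearMap hA).toContinuousLinearEquiv, rfl⟩

end InvertibleMaps

section Pullback

open scoped Topology

variable {E F Z : Type*} [NormedAddCommGroup E] [NormedSpace ℝ E]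
  [NormedAddCommGroup F] [NormedSpace ℝ F] [NormedAddCommGroup Z] [NormedSpace ℝ Z]

/-- The derivative prescribed at `(x, y)` by the pullback equation `lamT (G z) ∘ DG(z) = lam z`
for a solution with `G x = y`, namely `(lamT y)⁻¹ ∘ lam x`. It is `0` if `lamT y` is not
invertible. -/
noncomputable def pullbackSlope (lam : E → E →L[ℝ] Z) (lamT : F → F →L[ℝ] Z) (p : E × F) :
    E →L[ℝ] F :=
  (lamT p.2).inverse.comp (lam p.1)

variable {lam : E → E →L[ℝ] Z} {lamT : F → F →L[ℝ] Z} {p : E × F}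

lemma contDiffAt_pullbackSlope [CompleteSpace F] {n : WithTop ℕ∞} (hlam : ContDiffAt ℝ n lam p.1)
    (hlamT : ContDiffAt ℝ n lamT p.2) (hinv : (lamT p.2).IsInvertible) :
    ContDiffAt ℝ n (pullbackSlope lam lamT) p :=
  have hinverse : ContDiffAt ℝ n (fun q : E × F ↦ (lamT q.2).inverse) p :=
    ContDiffAt.comp p (g := ContinuousLinearMap.inverse) hinv.contDiffAt_map_inverse
      (hlamT.comp p contDiffAt_snd)
  hinverse.clm_comp (hlam.comp p contDiffAt_fst)

lemma clm_apply_fderiv_apply_eq_of_comp_eq {φ : E × F → E →L[ℝ] F}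
    (hφ : DifferentiableAt ℝ φ p) (hlam : DifferentiableAt ℝ lam p.1)
    (hlamT : DifferentiableAt ℝ lamT p.2) (heq : ∀ᶠ q in 𝓝 p, (lamT q.2).comp (φ q) = lam q.1)
    (w : E × F) (v : E) :
    lamT p.2 (fderiv ℝ φ p w v) = fderiv ℝ lam p.1 w.1 v - fderiv ℝ lamT p.2 w.2 (φ p v) := by
  have hleft := (hlamT.hasFDerivAt.comp p hasFDerivAt_snd).clm_comp hφ.hasFDerivAt
  have hright := hlam.hasFDerivAt.comp p hasFDerivAt_fst
  have hderiv := DFunLike.congr_fun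
    (DFunLike.congr_fun (hleft.unique (hright.congr_of_eventuallyEq heq)) w) v
  exact eq_sub_of_add_eq (by simpa using hderiv)

lemma isCompletelyIntegrableAt_pullbackSlope_iff [CompleteSpace F] (hlam : ContDiffAt ℝ 1 lam p.1)
    (hlamT : ContDiffAt ℝ 1 lamT p.2) (hinv : (lamT p.2).IsInvertible) {τ : E →L[ℝ] F}
    (hτ : τ = pullbackSlope lam lamT p) :
    IsCompletelyIntegrableAt (pullbackSlope lam lamT) p ↔ ∀ u v : E,
      fderiv ℝ lamT p.2 (τ u) (τ v) - fderiv ℝ lamT p.2 (τ v) (τ u)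
        = fderiv ℝ lam p.1 u v - fderiv ℝ lam p.1 v u := by
  have hinv_near : ∀ᶠ q in 𝓝 p, (lamT q.2).IsInvertible := by
    obtain ⟨e, he⟩ := hinv
    exact (hlamT.continuousAt.comp continuousAt_snd).eventually_mem (he ▸ e.nhds)
  have hderiv := clm_apply_fderiv_apply_eq_of_comp_eq
    ((contDiffAt_pullbackSlope hlam hlamT hinv).differentiableAt one_ne_zero)
    (hlam.differentiableAt one_ne_zero) (hlamT.differentiableAt one_ne_zero)
    (hinv_near.mono fun q hq ↦ (comp_eq_iff_eq_inverse_comp hq).2 rfl)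
  subst hτ
  refine forall₂_congr fun u v ↦ ?_
  rw [← hinv.injective.eq_iff, hderiv, hderiv, sub_eq_sub_iff_sub_eq_sub, eq_comm]

end Pullback

theorem frobenius_pullback_forms_general
    {E : Type*} [NormedAddCommGroup E] [NormedSpace ℝ E] [CompleteSpace E]
    {F : Type*} [NormedAddCommGroup F] [NormedSpace ℝ F] [CompleteSpace F]
    {Z : Type*} [NormedAddCommGroup Z] [NormedSpace ℝ Z] {n : ℕ∞} (hn : n ≠ 0)
    {M : Set E} (hM : IsOpen M) {N : Set F} (hN : IsOpen N)
    {lam : E → (E →L[ℝ] Z)} (hlam : ContDiffOn ℝ n lam M)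
    {lamT : F → (F →L[ℝ] Z)} (hlamT : ContDiffOn ℝ n lamT N)
    (hinv : ∀ y ∈ N, (lamT y).IsInvertible) :
    (∀ x ∈ M, ∀ y ∈ N, ∃ U : Set E, IsOpen U ∧ x ∈ U ∧ U ⊆ M ∧
        ∃ G : E → F, ContDiffOn ℝ (n + 1) G U ∧ (∀ z ∈ U, G z ∈ N) ∧ G x = y ∧
          ∀ z ∈ U, (lamT (G z)).comp (fderiv ℝ G z) = lam z)
      ↔
    (∀ x ∈ M, ∀ y ∈ N, ∀ τ : E →L[ℝ] F, (lamT y).comp τ = lam x →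
        ∀ u v : E,
          fderiv ℝ lamT y (τ u) (τ v) - fderiv ℝ lamT y (τ v) (τ u)
            = fderiv ℝ lam x u v - fderiv ℝ lam x v u) := by
  have h1n : (1 : WithTop ℕ∞) ≤ n := by exact_mod_cast Order.one_le_iff_ne_zero.2 hn
  have hlamAt {x : E} (hx : x ∈ M) := hlam.contDiffAt (hM.mem_nhds hx)
  have hlamTAt {y : F} (hy : y ∈ N) := hlamT.contDiffAt (hN.mem_nhds hy)
  have hslope {x : E} {y : F} (hy : y ∈ N) {τ : E →L[ℝ] F} :
      (lamT y).comp τ = lam x ↔ τ = pullbackSlope lam lamT (x, y) :=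
    comp_eq_iff_eq_inverse_comp (hinv y hy)
  have hintegrable {x : E} {y : F} (hx : x ∈ M) (hy : y ∈ N) {τ : E →L[ℝ] F} :=
    isCompletelyIntegrableAt_pullbackSlope_iff (p := (x, y)) (τ := τ)
      ((hlamAt hx).of_le h1n) ((hlamTAt hy).of_le h1n) (hinv y hy)
  have hfrobenius := forall_exists_solution_iff_forall_isCompletelyIntegrableAt hn (hM.prod hN)
    fun p hp ↦ (contDiffAt_pullbackSlope (hlamAt hp.1) (hlamTAt hp.2)
      (hinv p.2 hp.2)).contDiffWithinAt
  constructor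
  · intro hsol x hx y hy τ hτ
    refine (hintegrable hx hy ((hslope hy).1 hτ)).1
      (hfrobenius.1 (fun x y hp ↦ ?_) (x, y) ⟨hx, hy⟩)
    obtain ⟨U, hU, hxU, hUM, G, hG, hGN, hGx, hGsol⟩ := hsol x hp.1 y hp.2
    exact ⟨U, hU, hxU, G, hG, fun z hz ↦ ⟨hUM hz, hGN z hz⟩, hGx,
      fun z hz ↦ (hslope (hGN z hz)).1 (hGsol z hz)⟩
  · intro hext x hx y hy
    have hint (p : E × F) (hp : p ∈ M ×ˢ N) :
        IsCompletelyIntegrableAt (pullbackSlope lam lamT) p :=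
      (hintegrable hp.1 hp.2 rfl).2 (hext _ hp.1 _ hp.2 _ ((hslope hp.2).2 rfl))
    obtain ⟨U, hU, hxU, G, hG, hGMN, hGx, hGsol⟩ := hfrobenius.2 hint x y ⟨hx, hy⟩
    exact ⟨U, hU, hxU, fun z hz ↦ (hGMN z hz).1, G, hG, fun z hz ↦ (hGMN z hz).2, hGx,
      fun z hz ↦ (hslope (hGMN z hz).2).2 (hGsol z hz)⟩

/-- Frobenius-type theorem for the PDE `G*λ̃ = λ` in local coordinates.
Let `E`, `F`, `Z` be finite-dimensional real normed vector spaces, `𝓜 ⊆ E`, `𝓝 ⊆ F` open,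
`λ : 𝓜 → L(E, Z)`, `λ̃ : 𝓝 → L(F, Z)` smooth with `λ̃ y` a linear isomorphism for all `y ∈ 𝓝`.
Then local solvability of `λ̃(G(z)) ∘ DG(z) = λ(z)` with arbitrarily prescribed value `G x = y`
(condition (a)) is equivalent to the integrability condition matching the exterior derivatives
of `λ` and `λ̃` via `τ = λ̃(y)⁻¹ ∘ λ(x)` (condition (b)). -/
theorem frobenius_pullback_forms
    {E : Type*} [NormedAddCommGroup E] [NormedSpace ℝ E] [FiniteDimensional ℝ E]
    {F : Type*} [NormedAddCommGroup F] [NormedSpace ℝ F] [FiniteDimensional ℝ F]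
    {Z : Type*} [NormedAddCommGroup Z] [NormedSpace ℝ Z] [FiniteDimensional ℝ Z]
    (𝓜 : Set E) (h𝓜 : IsOpen 𝓜) (𝓝 : Set F) (h𝓝 : IsOpen 𝓝)
    (lam : E → (E →L[ℝ] Z)) (hlam : ContDiffOn ℝ (⊤ : ℕ∞) lam 𝓜)
    (lamT : F → (F →L[ℝ] Z)) (hlamT : ContDiffOn ℝ (⊤ : ℕ∞) lamT 𝓝)
    (hbij : ∀ y ∈ 𝓝, Function.Bijective (lamT y)) :
    (∀ x ∈ 𝓜, ∀ y ∈ 𝓝, ∃ U : Set E, IsOpen U ∧ x ∈ U ∧ U ⊆ 𝓜 ∧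
        ∃ G : E → F, ContDiffOn ℝ (⊤ : ℕ∞) G U ∧ (∀ z ∈ U, G z ∈ 𝓝) ∧ G x = y ∧
          ∀ z ∈ U, (lamT (G z)).comp (fderiv ℝ G z) = lam z)
      ↔
    (∀ x ∈ 𝓜, ∀ y ∈ 𝓝, ∀ τ : E →L[ℝ] F, (lamT y).comp τ = lam x →
        ∀ u v : E,
          fderiv ℝ lamT y (τ u) (τ v) - fderiv ℝ lamT y (τ v) (τ u)
            = fderiv ℝ lam x u v - fderiv ℝ lam x v u) := by
  have := FiniteDimensional.complete ℝ E
  have := FiniteDimensional.complete ℝ F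
  exact frobenius_pullback_forms_general ENat.top_ne_zero h𝓜 h𝓝 hlam hlamT fun y hy ↦
    isInvertible_of_bijective (hbij y hy)
end

section
/- Let S and X be topological spaces, π : S → X a continuous local homeomorphism, with S Hausdorff and X locally connected. Assume that every point of X has an open neighborhood U that is quasi-fundamental for π, i.e., such that for every x ∈ U and every s ∈ π⁻¹(x) there exists a continuous map σ : U → S with π ∘ σ equal to the inclusion of U into X and σ(x) = s. Then π is a covering map. -/
/-!
Shrink a quasi-fundamental neighborhood to a connected open one, `V`. Over `V` there is exactly one
section through each point of `π ⁻¹' V`, because sections are lifts of the identity along a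
separated, locally injective map. The image of a section is open, being the locus where
`σ ∘ π` and `id` agree, so the images of the sections partition `π ⁻¹' V` into open sheets. Sending
a point to its image in `V` and to the value at `x` of the section through it trivializes `π`.
-/

open Set Function

section

variable {E B : Type*} [TopologicalSpace E] {p : E → B}

theorem isSeparatedMap_restrictPreimage (hp : IsSeparatedMap p) (U : Set B) :
    IsSeparatedMap (U.restrictPreimage p) := fun s t hst ↦
  hp.comp_right continuous_subtype_val Subtype.val_injective s t (congrArg Subtype.val hst)

theorem isLocallyInjective_restrictPreimage (hp : IsLocallyInjective p) (U : Set B) :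
    IsLocallyInjective (U.restrictPreimage p) := fun s ↦
  have ⟨W, hW, hsW, hinj⟩ :=
    hp.comp_right (g := (Subtype.val : p ⁻¹' U → E)) continuous_subtype_val
      Subtype.val_injective s
  ⟨W, hW, hsW, fun _ ha _ hb hab ↦ hinj ha hb (congrArg Subtype.val hab)⟩

theorem discreteTopology_fiber_of_isLocallyInjective (hp : IsLocallyInjective p) (b : B) :
    DiscreteTopology (p ⁻¹' {b}) := by
  rw [discreteTopology_iff_locallyInjective b]
  have hconst : p ∘ Subtype.val = fun _ : p ⁻¹' {b} ↦ b := funext Subtype.property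
  exact hconst ▸ hp.comp_right continuous_subtype_val Subtype.val_injective

variable [TopologicalSpace B]

theorem isOpen_range_of_leftInverse (hp : Continuous p) (hinj : IsLocallyInjective p)
    {σ : B → E} (hσ : Continuous σ) (hpσ : LeftInverse p σ) : IsOpen (range σ) := by
  have hrange : range σ = {e | σ (p e) = e} := by
    ext e
    exact ⟨by rintro ⟨y, rfl⟩; exact congrArg σ (hpσ y), fun he ↦ ⟨p e, he⟩⟩
  rw [hrange]
  exact hinj.isOpen_eqLocus (hσ.comp hp) continuous_id (funext fun e ↦ hpσ (p e))

/-- `U` is quasi-fundamental for `p`: through every point of `E` over `U` there passes a continuous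
section of `p` on `U`. Sections are encoded as total maps `B → E`, whose values outside `U` are
irrelevant, and `U` is not required to be open. -/
def IsQuasiFundamental (p : E → B) (U : Set B) : Prop :=
  ∀ y ∈ U, ∀ e : E, p e = y → ∃ σ : B → E, ContinuousOn σ U ∧ LeftInvOn p σ U ∧ σ y = e

namespace IsQuasiFundamental

theorem mono {U V : Set B} (hU : IsQuasiFundamental p U) (hVU : V ⊆ U) :
    IsQuasiFundamental p V := fun y hy e he ↦
  have ⟨σ, hσ, hpσ, hσy⟩ := hU y (hVU hy) e he
  ⟨σ, hσ.mono hVU, hpσ.mono hVU, hσy⟩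

theorem exists_continuous_leftInverse (h : IsQuasiFundamental p univ) (e : E) :
    ∃ σ : B → E, Continuous σ ∧ LeftInverse p σ ∧ σ (p e) = e :=
  have ⟨σ, hσ, hpσ, hσe⟩ := h (p e) (mem_univ _) e rfl
  ⟨σ, continuousOn_univ.mp hσ, fun y ↦ hpσ (mem_univ y), hσe⟩

theorem restrictPreimage {U : Set B} (hU : IsQuasiFundamental p U) :
    IsQuasiFundamental (U.restrictPreimage p) univ := by
  rintro y - e he
  obtain ⟨σ, hσ, hpσ, hσy⟩ := hU y y.2 e (congrArg Subtype.val he)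
  have hσU (z : U) : σ z ∈ p ⁻¹' U := by
    rw [mem_preimage, hpσ z.2]
    exact z.2
  refine ⟨fun z ↦ ⟨σ z, hσU z⟩, ?_, fun z _ ↦ Subtype.ext (hpσ z.2), Subtype.ext hσy⟩
  exact (hσ.domRestrict.subtype_mk hσU).continuousOn

end IsQuasiFundamental

theorem IsQuasiFundamental.isHomeomorphicTrivialFiberBundle [PreconnectedSpace B]
    (h : IsQuasiFundamental p univ) (hp : Continuous p) (hsep : IsSeparatedMap p)
    (hinj : IsLocallyInjective p) (b : B) :
    IsHomeomorphicTrivialFiberBundle (p ⁻¹' {b}) p := by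
  choose σ hσ hpσ hσp using h.exists_continuous_leftInverse
  have section_unique (e : E) (y : B) : σ (σ e y) = σ e := by
    refine hsep.eq_of_comp_eq hinj (hσ _) (hσ e) ?_ y ?_
    · rw [(hpσ _).comp_eq_id, (hpσ e).comp_eq_id]
    · simpa only [hpσ e y] using hσp (σ e y)
  have := discreteTopology_fiber_of_isLocallyInjective hinj b
  let valueAt (e : E) : p ⁻¹' {b} := ⟨σ e b, hpσ e b⟩
  have valueAt_locallyConstant : IsLocallyConstant valueAt := by
    refine (IsLocallyConstant.iff_exists_open _).mpr fun e ↦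
      ⟨range (σ e), isOpen_range_of_leftInverse hp hinj (hσ e) (hpσ e), ⟨p e, hσp e⟩, ?_⟩
    rintro _ ⟨y, rfl⟩
    exact Subtype.ext (congrFun (section_unique e y) b)
  let trivialization : E ≃ₜ B × p ⁻¹' {b} :=
    { toFun e := (p e, valueAt e)
      invFun q := σ q.2 q.1
      left_inv e := (congrFun (section_unique e b) (p e)).trans (hσp e)
      right_inv := by
        rintro ⟨y, s, rfl⟩
        exact Prod.ext (hpσ s y)
          (Subtype.ext ((congrFun (section_unique s y) (p s)).trans (hσp s)))
      continuous_toFun := hp.prodMk valueAt_locallyConstant.continuous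
      continuous_invFun := continuous_prod_of_discrete_right.mpr fun s ↦ hσ s }
  exact ⟨trivialization, fun _ ↦ rfl⟩

theorem isCoveringMap_of_isHomeomorphicTrivialFiberBundle {F : Type*} [TopologicalSpace F]
    [DiscreteTopology F] (h : IsHomeomorphicTrivialFiberBundle F p) : IsCoveringMap p := fun b ↦
  have ⟨e, he⟩ := h
  have hb : IsEvenlyCovered p b F :=
    ⟨‹_›, univ, mem_univ b, isOpen_univ, isOpen_univ,
      (Homeomorph.Set.univ E).trans (e.trans ((Homeomorph.Set.univ B).symm.prodCongr (.refl F))),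
      fun s ↦ he s⟩
  hb.to_isEvenlyCovered_preimage

theorem IsQuasiFundamental.isCoveringMapOn {V : Set B} (h : IsQuasiFundamental p V)
    (hVo : IsOpen V) (hVc : IsPreconnected V) (hp : Continuous p) (hsep : IsSeparatedMap p)
    (hinj : IsLocallyInjective p) : IsCoveringMapOn p V := by
  have : PreconnectedSpace V := isPreconnected_iff_preconnectedSpace.mp hVc
  have hinjV := isLocallyInjective_restrictPreimage hinj V
  refine .of_isCoveringMap_restrictPreimage V hVo (hVo.preimage hp) fun x ↦ ?_
  have := discreteTopology_fiber_of_isLocallyInjective hinjV x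
  exact isCoveringMap_of_isHomeomorphicTrivialFiberBundle
    (h.restrictPreimage.isHomeomorphicTrivialFiberBundle hp.restrictPreimage
      (isSeparatedMap_restrictPreimage hsep V) hinjV x) x

theorem presheaf_quasiFundamental_isCoveringMap_general [LocallyConnectedSpace B]
    (hp : Continuous p) (hsep : IsSeparatedMap p) (hinj : IsLocallyInjective p)
    (hquasi : ∀ x : B, ∃ U : Set B, IsOpen U ∧ x ∈ U ∧ IsQuasiFundamental p U) :
    IsCoveringMap p := by
  intro x
  obtain ⟨U, hUo, hxU, hU⟩ := hquasi x
  have hV : IsQuasiFundamental p (connectedComponentIn U x) :=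
    hU.mono (connectedComponentIn_subset U x)
  exact hV.isCoveringMapOn hUo.connectedComponentIn isPreconnected_connectedComponentIn hp hsep
    hinj x (mem_connectedComponentIn hxU)

end

/-- Let `S`, `X` be topological spaces, `π : S → X` a continuous local
homeomorphism, with `S` Hausdorff and `X` locally connected. If every point of `X` has an open
neighborhood `U` that is quasi-fundamental for `π` (i.e. for every `x ∈ U` and every
`s ∈ π⁻¹(x)` there is a continuous local section `σ` of `π` on `U` with `σ x = s`), then `π` is
a covering map. -/
theorem presheaf_quasiFundamental_isCoveringMap
    {S X : Type*} [TopologicalSpace S] [TopologicalSpace X]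
    [T2Space S] [LocallyConnectedSpace X]
    (π : S → X) (hπ : IsLocalHomeomorph π)
    (hquasi : ∀ x : X, ∃ U : Set X, IsOpen U ∧ x ∈ U ∧
      ∀ y ∈ U, ∀ s : S, π s = y →
        ∃ σ : X → S, ContinuousOn σ U ∧ (∀ z ∈ U, π (σ z) = z) ∧ σ y = s) :
    IsCoveringMap π := by
  exact presheaf_quasiFundamental_isCoveringMap_general hπ.continuous (T2Space.isSeparatedMap π)
    hπ.isLocallyInjective hquasi
end

section
/- Let X be a locally connected topological space and let 𝔓 be a presheaf of sets over X having the uniqueness property: for every connected open U ⊆ X and every nonempty open V ⊆ U, the restriction map 𝔓_{U,V} : 𝔓(U) → 𝔓(V) is injective. Then for all open sets U, U' ⊆ X and all sections f ∈ 𝔓(U), f' ∈ 𝔓(U'), the set A = { x ∈ U ∩ U' : f and f' have the same germ at x } — that is, the set of x ∈ U ∩ U' admitting an open neighborhood W ⊆ U ∩ U' with 𝔓_{U,W}(f) = 𝔓_{U',W}(f') — is both open and closed in U ∩ U'. -/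
open TopologicalSpace

universe u v

/-- A presheaf of sets over a topological space `X`: to each open set `U ⊆ X` it assigns a set
`sec U` of "sections over `U`", and to each inclusion of opens `V ⊆ U` a restriction map
`res : sec U → sec V`, functorially. -/
structure PresheafOfSets (X : Type u) [TopologicalSpace X] where
  sec : Opens X → Type v
  res : ∀ {U V : Opens X}, V ≤ U → sec U → sec V
  res_self : ∀ (U : Opens X) (f : sec U), res le_rfl f = f
  res_res : ∀ {U V W : Opens X} (hVU : V ≤ U) (hWV : W ≤ V) (f : sec U),
    res hWV (res hVU f) = res (hWV.trans hVU) f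

namespace PresheafOfSets

variable {X : Type u} [TopologicalSpace X] {P : PresheafOfSets.{u, v} X} {U U' : Opens X}
  {f : P.sec U} {f' : P.sec U'} {x : X}

/-- The uniqueness property (identity principle) of a presheaf: a section over a connected open set
is determined by its restriction to any nonempty open subset. Since `V` is nonempty, so is `U`, and
preconnectedness of `U` amounts to connectedness. -/
def UniquenessProperty (P : PresheafOfSets.{u, v} X) : Prop :=
  ∀ (U V : Opens X), IsPreconnected (U : Set X) → (V : Set X).Nonempty →
    ∀ hVU : V ≤ U, Function.Injective (P.res hVU)

/-- Equality of the germs of `f` and `f'` at `x`, expressed by agreement on an open neighborhood of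
`x`, so that the stalk at `x` need not be constructed. It entails `x ∈ U ⊓ U'`. -/
def SameGermAt (f : P.sec U) (f' : P.sec U') (x : X) : Prop :=
  ∃ W : Opens X, x ∈ W ∧ ∃ hW : W ≤ U ⊓ U',
    P.res (hW.trans inf_le_left) f = P.res (hW.trans inf_le_right) f'

theorem res_eq_res_of_le {V W : Opens X} {hWU : W ≤ U} {hWU' : W ≤ U'}
    (h : P.res hWU f = P.res hWU' f') (hVW : V ≤ W) :
    P.res (hVW.trans hWU) f = P.res (hVW.trans hWU') f' := by
  rw [← P.res_res hWU hVW, h, P.res_res]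

theorem isOpen_setOf_sameGermAt (f : P.sec U) (f' : P.sec U') :
    IsOpen {x | SameGermAt f f' x} := by
  rw [isOpen_iff_forall_mem_open]
  rintro x ⟨W, hxW, hW, hres⟩
  exact ⟨W, fun y hyW => ⟨W, hyW, hW, hres⟩, W.isOpen, hxW⟩

theorem UniquenessProperty.res_eq_res_of_sameGermAt (hP : P.UniquenessProperty) {C : Opens X}
    (hC : IsPreconnected (C : Set X)) (hCU : C ≤ U) (hCU' : C ≤ U') (hxC : x ∈ C)
    (hx : SameGermAt f f' x) : P.res hCU f = P.res hCU' f' := by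
  obtain ⟨W, hxW, hW, hres⟩ := hx
  apply hP C (C ⊓ W) hC ⟨x, hxC, hxW⟩ inf_le_left
  rw [P.res_res, P.res_res]
  exact res_eq_res_of_le hres inf_le_right

theorem UniquenessProperty.sameGermAt_of_mem_closure [LocallyConnectedSpace X]
    (hP : P.UniquenessProperty) (hxU : x ∈ U ⊓ U')
    (hx : x ∈ closure {y | SameGermAt f f' y}) : SameGermAt f f' x := by
  obtain ⟨C, ⟨hC_open, hxC, hC_conn⟩, hCU⟩ :=
    (LocallyConnectedSpace.open_connected_basis x).mem_iff.mp ((U ⊓ U').isOpen.mem_nhds hxU)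
  obtain ⟨y, hyC, hy⟩ := mem_closure_iff.mp hx C hC_open hxC
  lift C to Opens X using hC_open
  exact ⟨C, hxC, hCU, hP.res_eq_res_of_sameGermAt hC_conn.isPreconnected _ _ hyC hy⟩

theorem UniquenessProperty.isClosed_preimage_val_setOf_sameGermAt [LocallyConnectedSpace X]
    (hP : P.UniquenessProperty) (f : P.sec U) (f' : P.sec U') :
    IsClosed (Subtype.val ⁻¹' {x | SameGermAt f f' x} : Set ((U ⊓ U' : Opens X) : Set X)) := by
  rw [isClosed_preimage_val]
  rintro x ⟨hxU, hx⟩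
  exact hP.sameGermAt_of_mem_closure hxU (closure_mono Set.inter_subset_right hx)

end PresheafOfSets

/-- Let `X` be a locally connected topological space and `𝔓` a presheaf of sets
over `X` with the uniqueness property (restriction from a connected open set to a nonempty open
subset is injective).  For opens `U`, `U'` and sections `f ∈ 𝔓(U)`, `f' ∈ 𝔓(U')`, the set `A` of
points of `U ∩ U'` at which `f` and `f'` have the same germ (i.e. which have an open neighborhood
`W ⊆ U ∩ U'` with `𝔓_{U,W}(f) = 𝔓_{U',W}(f')`) is both open and closed in `U ∩ U'`. -/
theorem presheaf_germAgreement_clopen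
    {X : Type u} [TopologicalSpace X] [LocallyConnectedSpace X]
    (P : PresheafOfSets.{u, v} X)
    (huniq : ∀ (U V : Opens X), IsPreconnected (U : Set X) → (V : Set X).Nonempty →
      ∀ hVU : V ≤ U, Function.Injective (P.res hVU))
    (U U' : Opens X) (f : P.sec U) (f' : P.sec U')
    (A : Set X)
    (hA : A = {x : X | ∃ W : Opens X, x ∈ W ∧ ∃ hW : W ≤ U ⊓ U',
      P.res (hW.trans inf_le_left) f = P.res (hW.trans inf_le_right) f'}) :
    IsOpen (Subtype.val ⁻¹' A : Set ((U ⊓ U' : Opens X) : Set X)) ∧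
    IsClosed (Subtype.val ⁻¹' A : Set ((U ⊓ U' : Opens X) : Set X)) := by
  subst hA
  have hP : P.UniquenessProperty := huniq
  exact ⟨(PresheafOfSets.isOpen_setOf_sameGermAt f f').preimage continuous_subtype_val,
    hP.isClosed_preimage_val_setOf_sameGermAt f f'⟩
end
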